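/- (Unified Pietsch Domination Theorem.) Let E be a nonempty set, G a Banach space, K a compact Hausdorff topological space, 0 < p < ∞, and let R : K × E × G → [0,∞) and S : E × G → [0,∞) be maps such that for every x ∈ E and b ∈ G the map φ ↦ R(φ, x, b) is continuous on K. Then the following are equivalent: (a) there is a constant C > 0 such that (Σ_{j=1}^m S(x_j, b_j)^p)^{1/p} ≤ C · sup_{φ∈K} (Σ_{j=1}^m R(φ, x_j, b_j)^p)^{1/p} for every m ∈ ℕ and all x₁, …, x_m ∈ E, b₁, …, b_m ∈ G; (b) there are a constant C > 0 and a Borel probability measure μ on K such that S(x, b) ≤ C · (∫_K R(φ, x, b)^p dμ(φ))^{1/p} for all x ∈ E and b ∈ G. -/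

import Mathlib

open scoped BigOperators
open MeasureTheory

/-! Raising both inequalities to the power `p` reduces the theorem to the case `p = 1`. There the
finite-sum inequality says that no finite sum of functions of the form `S x b - C * R · x b` is
strictly positive on `K`. Approximating real weights by rational ones, no element of the convex cone
they generate is strictly positive, so Hahn-Banach separates this cone from the open convex set of
strictly positive functions. The separating functional is positive, hence by Riesz-Markov-Kakutani
it is, up to scaling, integration against a probability measure. -/

open Filter Topology

section ConvexCone

variable {V : Type*} [AddCommGroup V] [Module ℝ V] [TopologicalSpace V] [ContinuousSMul ℝ V]

theorem hull_subset_of_closure_subset [ContinuousAdd V] {s F : Set V} (hF : IsClosed F)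
    (hsmul : ∀ r : ℝ, 0 ≤ r → ∀ v ∈ F, r • v ∈ F) (hsF : (AddSubmonoid.closure s : Set V) ⊆ F) :
    (PointedCone.hull ℝ s : Set V) ⊆ F := by
  intro w hw
  obtain ⟨c, hcs, hc, rfl⟩ := PointedCone.mem_hull_set.1 hw
  let approx (n : ℕ) : V := (n : ℝ)⁻¹ • ∑ v ∈ c.support, ⌈c v * n⌉₊ • v
  have approx_mem (n : ℕ) : approx n ∈ F :=
    hsmul _ (by positivity) _ <| hsF <| sum_mem fun v hv =>
      nsmul_mem (AddSubmonoid.subset_closure (hcs hv)) _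
  have weight_tendsto (v : V) : Tendsto (fun n : ℕ => (⌈c v * n⌉₊ : ℝ) / n) atTop (𝓝 (c v)) :=
    (tendsto_nat_ceil_mul_div_atTop (hc v)).comp tendsto_natCast_atTop_atTop
  have approx_eq (n : ℕ) : approx n = ∑ v ∈ c.support, ((⌈c v * n⌉₊ : ℝ) / n) • v := by
    simp only [approx, Finset.smul_sum, ← Nat.cast_smul_eq_nsmul ℝ, smul_smul, div_eq_inv_mul]
  have approx_tendsto : Tendsto approx atTop (𝓝 (c.sum fun v r => r • v)) := by
    simp only [funext approx_eq]
    exact tendsto_finsetSum _ fun v _ => (weight_tendsto v).smul_const v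
  exact hF.mem_of_tendsto approx_tendsto (.of_forall approx_mem)

theorem exists_strongDual_pos_nonpos_of_disjoint [IsTopologicalAddGroup V] {s : Set V}
    (hs : Convex ℝ s) (hs_open : IsOpen s) (T : PointedCone ℝ V) (hdisj : Disjoint s T) :
    ∃ Λ : StrongDual ℝ V, (∀ v ∈ s, 0 < Λ v) ∧ ∀ w ∈ T, Λ w ≤ 0 := by
  obtain ⟨f, u, hfs, hfT⟩ := geometric_hahn_banach_open hs hs_open T.convex hdisj
  have hu : u ≤ 0 := by simpa only [map_zero] using hfT 0 T.zero_mem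
  have hfT_nonneg (w : V) (hw : w ∈ T) : 0 ≤ f w := by
    by_contra! hneg
    have hscale : 0 ≤ (u - 1) / f w := div_nonneg_of_nonpos (by linarith) hneg.le
    have hle : u ≤ f (((u - 1) / f w) • w) := hfT _ (T.smul_mem hscale hw)
    rw [map_smul, smul_eq_mul, div_mul_cancel₀ _ hneg.ne] at hle
    linarith
  exact ⟨-f, fun v hv => neg_pos.2 ((hfs v hv).trans_le hu),
    fun w hw => neg_nonpos.2 (hfT_nonneg w hw)⟩

end ConvexCone

section ContinuousFunctions

variable {K : Type*} [TopologicalSpace K]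

theorem convex_setOf_forall_pos : Convex ℝ {f : C(K, ℝ) | ∀ x, 0 < f x} :=
  fun _ hf _ hg _ _ ha hb hab x => convex_Ioi (0 : ℝ) (hf x) (hg x) ha hb hab

theorem isOpen_setOf_forall_pos [CompactSpace K] : IsOpen {f : C(K, ℝ) | ∀ x, 0 < f x} := by
  simpa [Set.MapsTo] using
    ContinuousMap.isOpen_setOfPred_mapsTo (X := K) isCompact_univ (isOpen_Ioi (a := (0 : ℝ)))

theorem isClosed_setOf_exists_nonpos [CompactSpace K] :
    IsClosed {f : C(K, ℝ) | ∃ x, f x ≤ 0} := by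
  simpa [← isOpen_compl_iff, Set.compl_ofPred] using isOpen_setOf_forall_pos (K := K)

theorem map_nonneg_of_map_pos {Λ : C(K, ℝ) →ₗ[ℝ] ℝ}
    (hΛ : ∀ f : C(K, ℝ), (∀ x, 0 < f x) → 0 < Λ f) {f : C(K, ℝ)} (hf : 0 ≤ f) : 0 ≤ Λ f := by
  have h_one : 0 < Λ 1 := hΛ 1 fun _ => one_pos
  by_contra! hneg
  have hε : 0 < -Λ f / Λ 1 := div_pos (neg_pos.2 hneg) h_one
  have hpos : 0 < Λ (f + (-Λ f / Λ 1) • 1) :=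
    hΛ _ fun x => add_pos_of_nonneg_of_pos (hf x) (by simpa using hε)
  rw [map_add, map_smul, smul_eq_mul, div_mul_cancel₀ _ h_one.ne', add_neg_cancel] at hpos
  exact hpos.false

theorem le_ciSup_iff_exists_le_of_continuous [CompactSpace K] [Nonempty K] {α : Type*}
    [ConditionallyCompleteLinearOrder α] [TopologicalSpace α] [OrderTopology α] {f : K → α}
    (hf : Continuous f) {a : α} : a ≤ ⨆ x, f x ↔ ∃ x, a ≤ f x := by
  obtain ⟨x₀, hx₀⟩ := (isCompact_range hf).sSup_mem (Set.range_nonempty f)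
  exact ⟨fun h => ⟨x₀, h.trans hx₀.ge⟩,
    fun ⟨x, hx⟩ => hx.trans (le_ciSup (isCompact_range hf).bddAbove x)⟩

end ContinuousFunctions

section ProbabilityMeasures

variable {K : Type*} [TopologicalSpace K] [CompactSpace K] [T2Space K] [MeasurableSpace K]
  [BorelSpace K]

theorem exists_isProbabilityMeasure_integral_eq (Λ : C(K, ℝ) →ₚ[ℝ] ℝ) (hΛ : Λ 1 = 1) :
    ∃ μ : Measure K, IsProbabilityMeasure μ ∧ ∀ f : C(K, ℝ), ∫ x, f x ∂μ = Λ f := by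
  let Λc : CompactlySupportedContinuousMap K ℝ →ₚ[ℝ] ℝ := PositiveLinearMap.mk₀
    { toFun := fun f => Λ f.toContinuousMap
      map_add' := fun f g => map_add Λ f.toContinuousMap g.toContinuousMap
      map_smul' := fun r f => map_smul Λ r f.toContinuousMap }
    fun _ hf => Λ.map_nonneg hf
  have h_integral (f : C(K, ℝ)) : ∫ x, f x ∂(RealRMK.rieszMeasure Λc) = Λ f :=
    RealRMK.integral_rieszMeasure Λc ⟨f, HasCompactSupport.of_compactSpace f⟩
  refine ⟨RealRMK.rieszMeasure Λc, ⟨?_⟩, h_integral⟩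
  simpa [hΛ, Measure.real, ENNReal.toReal_eq_one_iff] using h_integral 1

theorem exists_isProbabilityMeasure_integral_nonpos (T : PointedCone ℝ C(K, ℝ))
    (hT : ∀ f ∈ T, ∃ x, f x ≤ 0) :
    ∃ μ : Measure K, IsProbabilityMeasure μ ∧ ∀ f ∈ T, ∫ x, f x ∂μ ≤ 0 := by
  have hdisj : Disjoint {f : C(K, ℝ) | ∀ x, 0 < f x} T :=
    Set.disjoint_left.2 fun f hf hfT => let ⟨x, hx⟩ := hT f hfT; (hf x).not_ge hx
  obtain ⟨Λ, hΛpos, hΛT⟩ := exists_strongDual_pos_nonpos_of_disjoint convex_setOf_forall_pos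
    isOpen_setOf_forall_pos T hdisj
  have h_one : 0 < Λ 1 := hΛpos 1 fun _ => one_pos
  let normalized : C(K, ℝ) →ₚ[ℝ] ℝ := PositiveLinearMap.mk₀ ((Λ 1)⁻¹ • Λ.toLinearMap) fun f hf =>
    mul_nonneg (inv_nonneg.2 h_one.le) (map_nonneg_of_map_pos (Λ := Λ.toLinearMap) hΛpos hf)
  obtain ⟨μ, hμ, h_integral⟩ :=
    exists_isProbabilityMeasure_integral_eq normalized (inv_mul_cancel₀ h_one.ne')
  refine ⟨μ, hμ, fun f hf => ?_⟩
  rw [h_integral]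
  exact mul_nonpos_of_nonneg_of_nonpos (inv_nonneg.2 h_one.le) (hΛT f hf)

theorem exists_isProbabilityMeasure_integral_nonpos_of_sum {ι : Type*} (g : ι → C(K, ℝ))
    (hg : ∀ (m : ℕ) (i : Fin m → ι), ∃ x, ∑ j, g (i j) x ≤ 0) :
    ∃ μ : Measure K, IsProbabilityMeasure μ ∧ ∀ i, ∫ x, g i x ∂μ ≤ 0 := by
  have h_closure :
      (AddSubmonoid.closure (Set.range g) : Set C(K, ℝ)) ⊆ {f | ∃ x, f x ≤ 0} := by
    intro f hf
    obtain ⟨l, hl, rfl⟩ := AddSubmonoid.exists_list_of_mem_closure hf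
    obtain ⟨is, rfl⟩ : l ∈ Set.range (List.map g) := by rwa [Set.range_list_map]
    obtain ⟨x, hx⟩ := hg is.length fun j => is[j]
    refine ⟨x, ?_⟩
    rwa [← Fin.sum_univ_fun_getElem, ContinuousMap.sum_apply]
  have h_hull := hull_subset_of_closure_subset isClosed_setOf_exists_nonpos
    (fun r hr _ ⟨x, hx⟩ => ⟨x, mul_nonpos_of_nonneg_of_nonpos hr hx⟩) h_closure
  obtain ⟨μ, hμ, h_integral⟩ := exists_isProbabilityMeasure_integral_nonpos _ h_hull
  exact ⟨μ, hμ, fun i => h_integral _ (PointedCone.subset_hull ⟨i, rfl⟩)⟩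

theorem forall_exists_sum_le_iff_exists_le_integral {ι : Type*} (u : ι → ℝ) (v : ι → C(K, ℝ)) :
    (∀ (m : ℕ) (i : Fin m → ι), ∃ x, ∑ j, u (i j) ≤ ∑ j, v (i j) x) ↔
      ∃ μ : Measure K, IsProbabilityMeasure μ ∧ ∀ i, u i ≤ ∫ x, v i x ∂μ := by
  have h_integrable (μ : Measure K) [IsProbabilityMeasure μ] (i : ι) : Integrable (v i) μ :=
    (v i).continuous.integrable_of_hasCompactSupport (.of_compactSpace _)
  constructor
  · intro h
    obtain ⟨μ, hμ, h_nonpos⟩ := exists_isProbabilityMeasure_integral_nonpos_of_sum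
      (fun i => .const K (u i) - v i) fun m i => by simpa using h m i
    refine ⟨μ, hμ, fun i => ?_⟩
    simpa [integral_sub (integrable_const _) (h_integrable μ i)] using h_nonpos i
  · rintro ⟨μ, hμ, h⟩ m i
    obtain ⟨x, hx⟩ := exists_integral_le (integrable_finsetSum Finset.univ fun j _ =>
      h_integrable μ (i j))
    refine ⟨x, ?_⟩
    calc ∑ j, u (i j) ≤ ∑ j, ∫ y, v (i j) y ∂μ := Finset.sum_le_sum fun j _ => h (i j)
      _ = ∫ y, ∑ j, v (i j) y ∂μ := (integral_finsetSum _ fun j _ => h_integrable μ (i j)).symm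
      _ ≤ ∑ j, v (i j) x := hx

end ProbabilityMeasures

theorem le_mul_rpow_one_div_iff {a b C p : ℝ} (ha : 0 ≤ a) (hb : 0 ≤ b) (hC : 0 ≤ C)
    (hp : 0 < p) : a ≤ C * b ^ (1 / p) ↔ a ^ p ≤ C ^ p * b := by
  rw [← Real.rpow_le_rpow_iff ha (by positivity) hp, Real.mul_rpow hC (by positivity), one_div,
    Real.rpow_inv_rpow hb hp.ne']

theorem rpow_one_div_le_mul_iSup_iff {K : Type*} [TopologicalSpace K] [CompactSpace K] [Nonempty K]
    {f : K → ℝ} (hf : Continuous f) (hf_nonneg : ∀ x, 0 ≤ f x) {a C p : ℝ} (ha : 0 ≤ a)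
    (hC : 0 ≤ C) (hp : 0 < p) :
    a ^ (1 / p) ≤ C * ⨆ x, f x ^ (1 / p) ↔ ∃ x, a ≤ C ^ p * f x := by
  have hcont : Continuous fun x => C * f x ^ (1 / p) :=
    continuous_const.mul (hf.rpow_const fun _ => .inr (by positivity))
  rw [Real.mul_iSup_of_nonneg hC, le_ciSup_iff_exists_le_of_continuous hcont]
  refine exists_congr fun x => ?_
  rw [le_mul_rpow_one_div_iff (by positivity) (hf_nonneg x) hC hp, one_div,
    Real.rpow_inv_rpow ha hp.ne']

theorem stmt12_general {K : Type*} [TopologicalSpace K] [CompactSpace K] [T2Space K]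
    [Nonempty K] [MeasurableSpace K] [BorelSpace K] {ι : Type*} {p C : ℝ} (hp : 0 < p)
    (hC : 0 ≤ C) (R : K → ι → ℝ) (S : ι → ℝ) (hRnn : ∀ φ i, 0 ≤ R φ i) (hSnn : ∀ i, 0 ≤ S i)
    (hRcont : ∀ i, Continuous fun φ => R φ i) :
    (∀ (m : ℕ) (i : Fin m → ι),
        (∑ j, S (i j) ^ p) ^ (1 / p) ≤ C * ⨆ φ : K, (∑ j, R φ (i j) ^ p) ^ (1 / p)) ↔
      ∃ μ : Measure K, IsProbabilityMeasure μ ∧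
        ∀ i, S i ≤ C * (∫ φ, R φ i ^ p ∂μ) ^ (1 / p) := by
  have hRp_nonneg (φ : K) (i : ι) : 0 ≤ R φ i ^ p := Real.rpow_nonneg (hRnn φ i) p
  have hRp_cont (i : ι) : Continuous fun φ => R φ i ^ p :=
    (hRcont i).rpow_const fun _ => .inr hp.le
  let v (i : ι) : C(K, ℝ) := ⟨fun φ => C ^ p * R φ i ^ p, continuous_const.mul (hRp_cont i)⟩
  have h_sum (m : ℕ) (i : Fin m → ι) :
      (∑ j, S (i j) ^ p) ^ (1 / p) ≤ C * ⨆ φ : K, (∑ j, R φ (i j) ^ p) ^ (1 / p) ↔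
        ∃ φ, ∑ j, S (i j) ^ p ≤ ∑ j, v (i j) φ := by
    simp only [v, ContinuousMap.coe_mk, ← Finset.mul_sum]
    exact rpow_one_div_le_mul_iSup_iff (continuous_finsetSum _ fun j _ => hRp_cont (i j))
      (fun φ => Finset.sum_nonneg fun j _ => hRp_nonneg φ (i j))
      (Finset.sum_nonneg fun j _ => Real.rpow_nonneg (hSnn (i j)) p) hC hp
  have h_integral (μ : Measure K) (i : ι) :
      S i ≤ C * (∫ φ, R φ i ^ p ∂μ) ^ (1 / p) ↔ S i ^ p ≤ ∫ φ, v i φ ∂μ := by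
    rw [le_mul_rpow_one_div_iff (hSnn i) (integral_nonneg fun φ => hRp_nonneg φ i) hC hp,
      ← integral_const_mul]
    rfl
  simp only [h_sum, h_integral]
  exact forall_exists_sum_le_iff_exists_le_integral (fun i => S i ^ p) v

/-- **Unified Pietsch Domination Theorem.** Let `E` be a nonempty set,
`G` a Banach space, `K` a compact Hausdorff space, `0 < p < ∞`, and `R : K × E × G → [0,∞)`,
`S : E × G → [0,∞)` with `φ ↦ R(φ,x,b)` continuous for all `x, b`.  Then `S` satisfies the
abstract `p`-summing inequality with respect to `R` if and only if there are `C > 0` and a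
Borel probability measure `μ` on `K` with
`S(x,b) ≤ C (∫_K R(φ,x,b)^p dμ(φ))^{1/p}` for all `x ∈ E, b ∈ G`. -/
theorem stmt12 {K : Type*} [TopologicalSpace K] [CompactSpace K] [T2Space K]
    [Nonempty K] [MeasurableSpace K] [BorelSpace K]
    {E : Type*} [Nonempty E]
    {G : Type*} [NormedAddCommGroup G] [NormedSpace ℝ G] [CompleteSpace G]
    (p : ℝ) (hp : 0 < p)
    (R : K → E → G → ℝ) (S : E → G → ℝ)
    (hRnn : ∀ φ x b, 0 ≤ R φ x b) (hSnn : ∀ x b, 0 ≤ S x b)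
    (hRcont : ∀ x b, Continuous fun φ => R φ x b) :
    (∃ C : ℝ, 0 < C ∧ ∀ (m : ℕ) (x : Fin m → E) (b : Fin m → G),
        (∑ j, S (x j) (b j) ^ p) ^ (1 / p) ≤
          C * ⨆ φ : K, (∑ j, R φ (x j) (b j) ^ p) ^ (1 / p)) ↔
    (∃ C : ℝ, 0 < C ∧ ∃ μ : Measure K, IsProbabilityMeasure μ ∧
        ∀ (x : E) (b : G),
          S x b ≤ C * (∫ φ, R φ x b ^ p ∂μ) ^ (1 / p)) := by
  refine exists_congr fun C => and_congr_right fun hC => ?_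
  simpa [(Equiv.arrowProdEquivProdArrow _ _ _).forall_congr_left] using stmt12_general (ι := E × G)
    hp hC.le (fun φ i => R φ i.1 i.2) (fun i => S i.1 i.2) (fun _ _ => hRnn _ _ _)
    (fun _ => hSnn _ _) fun _ => hRcont _ _
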